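/- Let ζ₁, ζ₂ > −3 with ζ̄ := ζ₁ + ζ₂ + 3 ∈ (0,∞) \ ℕ, let m ∈ ℕ, set m̄ := m ∨ (⌊ζ̄⌋ + 2), and let R > 0. For ε = 2^{−N} and K₁, K₂ : ε²ℤ × εℤ → ℝ supported in the ball of radius R around the origin, define K̄^ε(z) := (K₁ ∗_ε K₂)(z) − Σ_{k=(k₀,k₁), |k|_s < ζ̄} ((z)_{ε,k} / (k₀! k₁!)) D̄_ε^k (K₁ ∗_ε K₂)(0), where for z = (t,x) one sets (z)_{ε,k} := Π_{0 ≤ j < k₀} (t − ε² j) · Π_{0 ≤ j < k₁} (x − ε j). Then there is a constant C, depending only on m, ζ₁, ζ₂ and R (and not on ε), such that for all ε with 4mε < 1: ⦀K̄^ε⦀_{ζ̄; m}^{(ε)} ≤ C ⦀K₁⦀_{ζ₁; m̄}^{(ε)} ⦀K₂⦀_{ζ₂; m̄}^{(ε)}. -/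

import Mathlib

open Real

noncomputable section

/-- Forward time difference `D̄_{t,ε²}` on grid functions (indexed form:
`f m j` is the value at the point `(ε² m, ε j)`). -/
def fdT (ε : ℝ) (f : ℤ → ℤ → ℝ) : ℤ → ℤ → ℝ :=
  fun m j => (f (m + 1) j - f m j) / ε ^ 2

/-- Forward space difference `D̄_{x,ε}` on grid functions. -/
def fdX (ε : ℝ) (f : ℤ → ℤ → ℝ) : ℤ → ℤ → ℝ :=
  fun m j => (f m (j + 1) - f m j) / ε

/-- Iterated forward differences `D̄_ε^k = D̄_{t,ε²}^{k₀} D̄_{x,ε}^{k₁}`. -/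
def fdiff (ε : ℝ) (k₀ k₁ : ℕ) (f : ℤ → ℤ → ℝ) : ℤ → ℤ → ℝ :=
  (fdT ε)^[k₀] ((fdX ε)^[k₁] f)

/-- Parabolic norm `‖z‖_s` of the grid point `z = (ε² m, ε j)`. -/
def snorm (ε : ℝ) (m j : ℤ) : ℝ :=
  max (Real.sqrt |ε ^ 2 * (m : ℝ)|) |ε * (j : ℝ)|

/-- `‖z‖_{s,ε} = ‖z‖_s ∨ ε` for the grid point `z = (ε² m, ε j)`. -/
def snormE (ε : ℝ) (m j : ℤ) : ℝ := max (snorm ε m j) ε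

/-- The grid function `K` is supported in the parabolic ball of radius `R`
around the origin. -/
def SuppIn (ε R : ℝ) (K : ℤ → ℤ → ℝ) : Prop :=
  ∀ m j : ℤ, R < snorm ε m j → K m j = 0

/-- `⦀K⦀_{ζ;m}^{(ε)} ≤ M`, expressed through the defining bounds. -/
def SingBound (ε ζ : ℝ) (m : ℕ) (M : ℝ) (K : ℤ → ℤ → ℝ) : Prop :=
  ∀ k₀ k₁ : ℕ, 2 * k₀ + k₁ ≤ m → ∀ mz j : ℤ,
    |fdiff ε k₀ k₁ K mz j| ≤ M * snormE ε mz j ^ (ζ - (2 * (k₀ : ℝ) + (k₁ : ℝ)))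

/-- The discrete space-time convolution `(K₁ ∗_ε K₂)(z) = ε³ Σ_w K₁(z-w) K₂(w)`
on grid indices. -/
def dconv (ε : ℝ) (K₁ K₂ : ℤ → ℤ → ℝ) : ℤ → ℤ → ℝ :=
  fun m j => ε ^ 3 * ∑' p : ℤ × ℤ, K₁ (m - p.1) (j - p.2) * K₂ p.1 p.2

/-- The discrete monomial `(z)_{ε,k}` for `z = (ε² m, ε j)` and `k = (k₀,k₁)`. -/
def dmonomial (ε : ℝ) (k₀ k₁ : ℕ) (m j : ℤ) : ℝ :=
  (∏ i ∈ Finset.range k₀, (ε ^ 2 * (m : ℝ) - ε ^ 2 * (i : ℝ))) *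
    ∏ i ∈ Finset.range k₁, (ε * (j : ℝ) - ε * (i : ℝ))

/-- The convolution with its discrete Taylor polynomial at the origin (up to
parabolic degree `< ζ̄`) subtracted. -/
def dconvTaylor (ε : ℝ) (zbar : ℝ) (K₁ K₂ : ℤ → ℤ → ℝ) : ℤ → ℤ → ℝ :=
  fun m j => dconv ε K₁ K₂ m j -
    ∑ k₀ ∈ Finset.range (Nat.ceil zbar), ∑ k₁ ∈ Finset.range (Nat.ceil zbar),
      if (2 * (k₀ : ℝ) + (k₁ : ℝ)) < zbar then
        dmonomial ε k₀ k₁ m j / ((k₀.factorial : ℝ) * (k₁.factorial : ℝ)) *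
          fdiff ε k₀ k₁ (dconv ε K₁ K₂) 0 0
      else 0

/-!
Rescaling to unit mesh removes `ε` from the problem. For `|k|_s > ζ̄`, splitting `K₁` with a cutoff
at the scale of `p` lets every difference in `D^k (K₁ ∗ K₂) p` fall on a factor whose argument stays
away from the origin; summing powers of the parabolic norm over balls and over their complements
then gives `|D^k (K₁ ∗ K₂) p| ≲ ‖p‖ ^ (ζ̄ - |k|_s)`. Below the degree `ζ̄`, subtracting the Taylor
polynomial makes all differences vanish at the origin, so the bounds for the higher differences can
be integrated from there, by downward induction on the degree. The exponents met on the way down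
are `ζ̄ - |k|_s`; as `ζ̄ ∉ ℕ`, none of them is `0`, and no logarithm appears.
-/

theorem rpow_le_rpow_abs_mul_rpow {c x y : ℝ} (hx : 0 < x) (hy : 0 < y) (hxy : x ≤ c * y)
    (hyx : y ≤ c * x) (s : ℝ) : x ^ s ≤ c ^ |s| * y ^ s := by
  have hc : 0 < c := pos_of_mul_pos_left (hx.trans_le hxy) hy.le
  rcases le_total 0 s with hs | hs
  · rw [abs_of_nonneg hs, ← mul_rpow hc.le hy.le]
    exact rpow_le_rpow hx.le hxy hs
  · rw [abs_of_nonpos hs, rpow_neg hc.le, ← inv_rpow hc.le, ← mul_rpow (by positivity) hy.le]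
    exact rpow_le_rpow_of_nonpos (by positivity) ((inv_mul_le_iff₀ hc).2 hyx) hs

/-- A size function on an additive group, bounded below by `1`, even and subadditive, whose balls
of radius `r` have at most of order `r ^ d` elements. The lower bound encodes the cutoff at the
mesh size of a lattice; `d` is the (possibly anisotropic) dimension. -/
structure IsCoarseNorm {G : Type*} [AddCommGroup G] (N : G → ℝ) (d : ℝ) : Prop where
  one_le : ∀ p, 1 ≤ N p
  map_neg : ∀ p, N (-p) = N p
  map_add_le : ∀ p q, N (p + q) ≤ N p + N q
  exists_card_le : ∃ C : ℝ, ∀ (S : Finset G) (r : ℝ), 0 < r → (∀ p ∈ S, N p ≤ r) →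
    (S.card : ℝ) ≤ C * r ^ d

namespace IsCoarseNorm

variable {G : Type*} [AddCommGroup G] {N : G → ℝ} {d : ℝ}

theorem pos (hN : IsCoarseNorm N d) (p : G) : 0 < N p :=
  one_pos.trans_le (hN.one_le p)

theorem le_sub_add (hN : IsCoarseNorm N d) (p q : G) : N p ≤ N (p - q) + N q := by
  simpa using hN.map_add_le (p - q) q

theorem le_sub_add' (hN : IsCoarseNorm N d) (p q : G) : N q ≤ N (p - q) + N p := by
  rw [← hN.map_neg (p - q), neg_sub]
  exact hN.le_sub_add q p

theorem nonneg_of_forall_abs_le (hN : IsCoarseNorm N d) {f : G → ℝ} {M s : ℝ}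
    (hf : ∀ p, |f p| ≤ M * N p ^ s) : 0 ≤ M :=
  nonneg_of_mul_nonneg_left ((abs_nonneg _).trans (hf 0)) (rpow_pos_of_pos (hN.pos 0) s)

theorem finite_ball (hN : IsCoarseNorm N d) {r : ℝ} (hr : 0 < r) : {p | N p ≤ r}.Finite := by
  obtain ⟨C, hC⟩ := hN.exists_card_le
  by_contra hinf
  obtain ⟨n, hn⟩ := exists_nat_gt (C * r ^ d)
  obtain ⟨S, hS, hcard⟩ := Set.Infinite.exists_subset_card_eq hinf n
  have := hC S r hr fun p hp => hS hp
  rw [hcard] at this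
  exact this.not_gt hn

theorem exists_sum_shell_le (hN : IsCoarseNorm N d) (ζ : ℝ) :
    ∃ C : ℝ, 0 ≤ C ∧ ∀ (S : Finset G) (r : ℝ), 0 < r →
      (∀ p ∈ S, N p ≤ r ∧ r ≤ 2 * N p) → ∑ p ∈ S, N p ^ ζ ≤ C * r ^ (ζ + d) := by
  obtain ⟨C, hC⟩ := hN.exists_card_le
  have hC0 : 0 ≤ C := by simpa using hC ∅ 1 one_pos
  refine ⟨C * 2 ^ |ζ|, by positivity, fun S r hr hS => ?_⟩
  have hterm : ∀ p ∈ S, N p ^ ζ ≤ 2 ^ |ζ| * r ^ ζ := fun p hp =>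
    rpow_le_rpow_abs_mul_rpow (hN.pos p) hr (by linarith [(hS p hp).1]) (hS p hp).2 ζ
  calc ∑ p ∈ S, N p ^ ζ ≤ S.card * (2 ^ |ζ| * r ^ ζ) := by
        simpa using Finset.sum_le_card_nsmul S _ _ hterm
    _ ≤ C * r ^ d * (2 ^ |ζ| * r ^ ζ) := by gcongr; exact hC S r hr fun p hp => (hS p hp).1
    _ = C * 2 ^ |ζ| * r ^ (ζ + d) := by rw [rpow_add hr]; ring

theorem exists_sum_ball_le (hN : IsCoarseNorm N d) {ζ : ℝ} (hζ : -d < ζ) :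
    ∃ C : ℝ, ∀ (S : Finset G) (r : ℝ), 0 < r →
      (∀ p ∈ S, N p ≤ r) → ∑ p ∈ S, N p ^ ζ ≤ C * r ^ (ζ + d) := by
  obtain ⟨D, hD, hshell⟩ := hN.exists_sum_shell_le ζ
  set q : ℝ := 2⁻¹ ^ (ζ + d) with hq
  have hq1 : q < 1 := rpow_lt_one (by norm_num) (by norm_num) (by linarith)
  have : 0 ≤ D / (1 - q) := div_nonneg hD (by linarith)
  refine ⟨D / (1 - q), fun S r hr hS => ?_⟩
  obtain ⟨n, hn⟩ := pow_unbounded_of_one_lt r (one_lt_two : (1 : ℝ) < 2)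
  induction n generalizing S r with
  | zero =>
    have hempty : S = ∅ := Finset.eq_empty_of_forall_notMem fun p hp => by
      linarith [hS p hp, hN.one_le p, pow_zero (2 : ℝ)]
    rw [hempty, Finset.sum_empty]
    positivity
  | succ n ih =>
    classical
    rw [← Finset.sum_filter_add_sum_filter_not S (fun p => N p ≤ r / 2)]
    have hinner := ih {p ∈ S | N p ≤ r / 2} (r / 2) (by positivity)
      (fun p hp => (Finset.mem_filter.1 hp).2) (by rw [pow_succ] at hn; linarith)
    have houter := hshell {p ∈ S | ¬ N p ≤ r / 2} r hr fun p hp => by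
      obtain ⟨hpS, hp⟩ := Finset.mem_filter.1 hp
      exact ⟨hS p hpS, by linarith⟩
    refine (add_le_add hinner houter).trans_eq ?_
    rw [div_eq_inv_mul r 2, mul_rpow (by norm_num) hr.le, ← hq]
    field [(sub_pos.2 hq1).ne']

theorem exists_sum_tail_le (hN : IsCoarseNorm N d) {ζ : ℝ} (hζ : ζ < -d) :
    ∃ C : ℝ, ∀ (S : Finset G) (r : ℝ), 0 < r →
      (∀ p ∈ S, r ≤ N p) → ∑ p ∈ S, N p ^ ζ ≤ C * r ^ (ζ + d) := by
  obtain ⟨D, hD, hshell⟩ := hN.exists_sum_shell_le ζ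
  set q : ℝ := 2 ^ (ζ + d) with hq
  have hq1 : q < 1 := rpow_lt_one_of_one_lt_of_neg (by norm_num) (by linarith)
  have : 0 ≤ D * q / (1 - q) := div_nonneg (by positivity) (by linarith)
  refine ⟨D * q / (1 - q), fun S r hr hS => ?_⟩
  classical
  obtain ⟨T, hT⟩ := (S.image N).exists_le
  rw [Finset.forall_mem_image] at hT
  obtain ⟨n, hn⟩ := pow_unbounded_of_one_lt (T / r) (one_lt_two : (1 : ℝ) < 2)
  rw [div_lt_iff₀ hr] at hn
  induction n generalizing S r with
  | zero =>
    have hempty : S = ∅ := Finset.eq_empty_of_forall_notMem fun p hp => by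
      linarith [hS p hp, hT hp, pow_zero (2 : ℝ)]
    rw [hempty, Finset.sum_empty]
    positivity
  | succ n ih =>
    rw [← Finset.sum_filter_add_sum_filter_not S (fun p => 2 * r ≤ N p)]
    have houter := ih {p ∈ S | 2 * r ≤ N p} (2 * r) (by positivity)
      (fun p hp => (Finset.mem_filter.1 hp).2) (fun p hp => hT (Finset.mem_filter.1 hp).1)
      (by rw [pow_succ] at hn; linarith)
    have hinner := hshell {p ∈ S | ¬ 2 * r ≤ N p} (2 * r) (by positivity) fun p hp => by
      obtain ⟨hpS, hp⟩ := Finset.mem_filter.1 hp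
      exact ⟨by linarith, by linarith [hS p hpS]⟩
    refine (add_le_add houter hinner).trans_eq ?_
    rw [mul_rpow (by norm_num) hr.le, ← hq]
    field [(sub_pos.2 hq1).ne']

end IsCoarseNorm

open fwdDiff

section DiscreteConv

variable {G : Type*} [AddCommGroup G]

/-- Convolution of real functions on a discrete group with respect to the counting measure. -/
def discreteConv (f g : G → ℝ) : G → ℝ := fun p => ∑' q, f (p - q) * g q

theorem discreteConv_comm (f g : G → ℝ) : discreteConv f g = discreteConv g f := by
  funext p
  unfold discreteConv
  rw [← (Equiv.subLeft p).tsum_eq]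
  simp [Equiv.subLeft_apply, mul_comm]

theorem discreteConv_eq_sum (f : G → ℝ) {g : G → ℝ} {S : Finset G} (hg : Function.support g ⊆ S)
    (p : G) : discreteConv f g p = ∑ q ∈ S, f (p - q) * g q :=
  tsum_eq_sum fun q hq => by
    rw [Function.notMem_support.1 fun h => hq (hg h), mul_zero]

theorem add_discreteConv (f₁ f₂ : G → ℝ) {g : G → ℝ} (hg : g.HasFiniteSupport) :
    discreteConv (f₁ + f₂) g = discreteConv f₁ g + discreteConv f₂ g := by
  have hS := hg.coe_toFinset.ge
  funext p
  simp only [Pi.add_apply, discreteConv_eq_sum _ hS, add_mul, Finset.sum_add_distrib]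

theorem fwdDiff_discreteConv (h : G) (f : G → ℝ) {g : G → ℝ} (hg : g.HasFiniteSupport) :
    Δ_[h] (discreteConv f g) = discreteConv (Δ_[h] f) g := by
  have hS := hg.coe_toFinset.ge
  funext p
  simp only [fwdDiff, discreteConv_eq_sum _ hS, ← Finset.sum_sub_distrib, ← sub_mul,
    add_sub_right_comm]

end DiscreteConv

namespace IsCoarseNorm

variable {G : Type*} [AddCommGroup G] {N : G → ℝ} {d : ℝ}

theorem exists_abs_discreteConv_near_le (hN : IsCoarseNorm N d) {α b : ℝ} (hα : -d < α)
    (hb : b ≤ 0) : ∃ C : ℝ, ∀ (g h : G → ℝ) (M A : ℝ) (p : G),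
      (∀ q, |g q| ≤ M * N q ^ b) → (∀ q, |h q| ≤ A * N q ^ α) →
      (∀ q, N p / 2 < N q → h q = 0) →
      |discreteConv g h p| ≤ C * M * A * N p ^ (α + d + b) := by
  obtain ⟨C, hball⟩ := hN.exists_sum_ball_le hα
  refine ⟨C * 2⁻¹ ^ (α + d + b), fun g h M A p hg hh hsupp => ?_⟩
  have hM : 0 ≤ M := hN.nonneg_of_forall_abs_le hg
  have hA : 0 ≤ A := hN.nonneg_of_forall_abs_le hh
  set r := N p / 2
  have hr : 0 < r := half_pos (hN.pos p)
  have hrr : r + r = N p := add_halves _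
  set S := (hN.finite_ball hr).toFinset with hS
  have mem_S : ∀ q, q ∈ S ↔ N q ≤ r := fun q => by simp [hS]
  have hterm : ∀ q ∈ S, |g (p - q) * h q| ≤ M * r ^ b * (A * N q ^ α) := fun q hq => by
    have hfar : r ≤ N (p - q) := by linarith [hN.le_sub_add p q, (mem_S q).1 hq]
    rw [abs_mul]
    gcongr
    · exact (hg _).trans (by gcongr 1; exact rpow_le_rpow_of_nonpos hr hfar hb)
    · exact hh q
  have hsupp_S : Function.support h ⊆ S := fun q hq =>
    (mem_S q).2 (not_lt.1 fun hlt => hq (hsupp q hlt))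
  calc |discreteConv g h p| ≤ ∑ q ∈ S, |g (p - q) * h q| := by
        rw [discreteConv_eq_sum g hsupp_S]; exact Finset.abs_sum_le_sum_abs _ _
    _ ≤ ∑ q ∈ S, M * r ^ b * (A * N q ^ α) := Finset.sum_le_sum hterm
    _ = M * r ^ b * A * ∑ q ∈ S, N q ^ α := by
        rw [Finset.mul_sum]; simp only [mul_assoc]
    _ ≤ M * r ^ b * A * (C * r ^ (α + d)) := by
        gcongr; exact hball S r hr fun q hq => (mem_S q).1 hq
    _ = C * M * A * r ^ (α + d + b) := by rw [rpow_add hr (α + d) b]; ring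
    _ = C * 2⁻¹ ^ (α + d + b) * M * A * N p ^ (α + d + b) := by
        rw [show r = 2⁻¹ * N p from div_eq_inv_mul _ _, mul_rpow (by norm_num) (hN.pos p).le]
        ring

theorem abs_sub_mul_le_of_eq_zero_near (hN : IsCoarseNorm N d) {a β c M A : ℝ} (ha : a ≤ 0)
    (hc : 0 < c) {g h : G → ℝ} {p : G} (hg : ∀ q, |g q| ≤ M * N q ^ a)
    (hh : ∀ q, |h q| ≤ A * N q ^ β) (hvanish : ∀ q, N q < c * N p → g q = 0) (q : G) :
    |g (p - q) * h q| ≤ M * (c * N p) ^ a * A * N q ^ β := by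
  have hM : 0 ≤ M := hN.nonneg_of_forall_abs_le hg
  have hcp : 0 < c * N p := mul_pos hc (hN.pos p)
  rw [abs_mul, mul_assoc _ A]
  gcongr
  · rcases lt_or_ge (N (p - q)) (c * N p) with hlt | hge
    · rw [hvanish _ hlt, abs_zero]
      positivity
    · exact (hg _).trans (by gcongr 1; exact rpow_le_rpow_of_nonpos hcp hge ha)
  · exact hh q

theorem abs_sub_mul_le_of_two_mul_lt (hN : IsCoarseNorm N d) {a β M A : ℝ} (ha : a ≤ 0)
    {g h : G → ℝ} {p q : G} (hg : ∀ q, |g q| ≤ M * N q ^ a) (hh : ∀ q, |h q| ≤ A * N q ^ β)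
    (hq : 2 * N p < N q) : |g (p - q) * h q| ≤ M * 2⁻¹ ^ a * A * N q ^ (a + β) := by
  have hM : 0 ≤ M := hN.nonneg_of_forall_abs_le hg
  have hq0 := hN.pos q
  have hcomp : 2⁻¹ * N q ≤ N (p - q) := by linarith [hN.le_sub_add' p q]
  calc |g (p - q) * h q| ≤ M * (2⁻¹ * N q) ^ a * (A * N q ^ β) := by
        rw [abs_mul]
        gcongr
        · exact (hg _).trans (by gcongr 1; exact rpow_le_rpow_of_nonpos (by positivity) hcomp ha)
        · exact hh q
    _ = M * 2⁻¹ ^ a * A * N q ^ (a + β) := by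
        rw [mul_rpow (by norm_num) hq0.le, rpow_add hq0]
        ring

/-- Near the origin `g` is bounded by its value at distance `c * N p`; beyond `2 * N p` the sizes
of `q` and `p - q` are comparable, and the tail sum of order `a + β` converges. -/
theorem exists_abs_discreteConv_far_le (hN : IsCoarseNorm N d) {a β c : ℝ} (ha : a ≤ 0)
    (hβ : -d < β) (haβ : a + β < -d) (hc : 0 < c) :
    ∃ C : ℝ, ∀ (g h : G → ℝ) (M A : ℝ) (p : G), h.HasFiniteSupport →
      (∀ q, |g q| ≤ M * N q ^ a) → (∀ q, |h q| ≤ A * N q ^ β) →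
      (∀ q, N q < c * N p → g q = 0) →
      |discreteConv g h p| ≤ C * M * A * N p ^ (a + β + d) := by
  classical
  obtain ⟨C₁, hball⟩ := hN.exists_sum_ball_le hβ
  obtain ⟨C₂, htail⟩ := hN.exists_sum_tail_le haβ
  refine ⟨c ^ a * (C₁ * 2 ^ (β + d)) + 2⁻¹ ^ a * (C₂ * 2 ^ (a + β + d)),
    fun g h M A p hfin hg hh hvanish => ?_⟩
  have hM : 0 ≤ M := hN.nonneg_of_forall_abs_le hg
  have hA : 0 ≤ A := hN.nonneg_of_forall_abs_le hh
  have hp := hN.pos p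
  set r := 2 * N p
  have hr : 0 < r := by positivity
  rw [discreteConv_eq_sum g hfin.coe_toFinset.ge]
  set S := hfin.toFinset
  calc |∑ q ∈ S, g (p - q) * h q|
      ≤ ∑ q ∈ S with N q ≤ r, |g (p - q) * h q| + ∑ q ∈ S with ¬ N q ≤ r, |g (p - q) * h q| := by
        rw [Finset.sum_filter_add_sum_filter_not]; exact Finset.abs_sum_le_sum_abs _ _
    _ ≤ ∑ q ∈ S with N q ≤ r, M * (c * N p) ^ a * A * N q ^ β +
          ∑ q ∈ S with ¬ N q ≤ r, M * 2⁻¹ ^ a * A * N q ^ (a + β) := by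
        gcongr with q _ q hq
        · exact hN.abs_sub_mul_le_of_eq_zero_near ha hc hg hh hvanish q
        · exact hN.abs_sub_mul_le_of_two_mul_lt ha hg hh (not_le.1 (Finset.mem_filter.1 hq).2)
    _ ≤ M * (c * N p) ^ a * A * (C₁ * r ^ (β + d)) +
          M * 2⁻¹ ^ a * A * (C₂ * r ^ (a + β + d)) := by
        rw [← Finset.mul_sum, ← Finset.mul_sum]
        gcongr
        · exact hball _ r hr fun q hq => (Finset.mem_filter.1 hq).2
        · exact htail _ r hr fun q hq => (not_le.1 (Finset.mem_filter.1 hq).2).le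
    _ = _ := by
        rw [mul_rpow hc.le hp.le, mul_rpow two_pos.le hp.le, mul_rpow two_pos.le hp.le,
          add_assoc a β d, rpow_add hp a (β + d)]
        ring

end IsCoarseNorm

/-- The two coordinate directions of the space-time lattice `ℤ × ℤ`. -/
inductive LatticeAxis
  | time
  | space

namespace LatticeAxis

/-- The multi-index of a single difference in the given direction. -/
def index : LatticeAxis → ℕ × ℕ
  | time => (1, 0)
  | space => (0, 1)

/-- The lattice unit vector in the given direction. -/
def shift : LatticeAxis → ℤ × ℤ
  | time => (1, 0)
  | space => (0, 1)

/-- The parabolic scaling weight of a direction: time counts twice. -/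
def weight : LatticeAxis → ℕ
  | time => 2
  | space => 1

/-- The forward difference in a coordinate direction, with unit mesh, as a linear operator. -/
def diff (i : LatticeAxis) : Module.End ℝ (ℤ × ℤ → ℝ) where
  toFun := Δ_[i.shift]
  map_add' := fwdDiff_add i.shift
  map_smul' := fwdDiff_const_smul i.shift

theorem diff_apply (i : LatticeAxis) (f : ℤ × ℤ → ℝ) (p : ℤ × ℤ) :
    i.diff f p = f (p + i.shift) - f p :=
  rfl

theorem diff_commute (i j : LatticeAxis) : Commute i.diff j.diff := by
  ext f p
  simp only [Module.End.mul_apply, diff_apply, add_right_comm p i.shift]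
  ring

theorem diff_mul (i : LatticeAxis) (f g : ℤ × ℤ → ℝ) :
    i.diff (f * g) = i.diff f * (fun p => g (p + i.shift)) + f * i.diff g := by
  funext p
  simp only [diff_apply, Pi.add_apply, Pi.mul_apply]
  ring

theorem weight_pos (i : LatticeAxis) : 0 < i.weight := by
  cases i <;> decide

end LatticeAxis

/-- The parabolic degree `|k|_s = 2 k₀ + k₁` of a multi-index. -/
def parabolicDegree (k : ℕ × ℕ) : ℕ := 2 * k.1 + k.2

theorem parabolicDegree_add_index (k : ℕ × ℕ) (i : LatticeAxis) :
    parabolicDegree (k + i.index) = parabolicDegree k + i.weight := by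
  cases i <;> simp [parabolicDegree, LatticeAxis.index, LatticeAxis.weight] <;> ring

@[elab_as_elim]
theorem multiIndex_induction {P : ℕ × ℕ → Prop} (zero : P 0)
    (add_index : ∀ k (i : LatticeAxis), P k → P (k + i.index)) (k : ℕ × ℕ) : P k := by
  obtain ⟨k₀, k₁⟩ := k
  induction k₀ with
  | zero =>
    induction k₁ with
    | zero => exact zero
    | succ k₁ ih => exact add_index (0, k₁) .space ih
  | succ k₀ ih => exact add_index (k₀, k₁) .time ih

/-- The iterated forward difference `D^k` with unit mesh, as a linear operator. -/
def latticeDiff (k : ℕ × ℕ) : Module.End ℝ (ℤ × ℤ → ℝ) :=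
  LatticeAxis.time.diff ^ k.1 * LatticeAxis.space.diff ^ k.2

section LatticeDiff

variable (k : ℕ × ℕ) (i : LatticeAxis)

theorem latticeDiff_zero : latticeDiff 0 = 1 := by
  simp [latticeDiff]

theorem latticeDiff_add_index : latticeDiff (k + i.index) = latticeDiff k * i.diff := by
  cases i with
  | time =>
    have h := (LatticeAxis.diff_commute .time .space).pow_right k.2
    simp only [latticeDiff, LatticeAxis.index, Prod.fst_add, Prod.snd_add, add_zero, pow_succ,
      mul_assoc, h.eq]
  | space =>
    simp only [latticeDiff, LatticeAxis.index, Prod.fst_add, Prod.snd_add, add_zero, pow_succ,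
      mul_assoc]

theorem latticeDiff_commute_diff : Commute (latticeDiff k) i.diff :=
  ((LatticeAxis.diff_commute _ _).pow_left _).mul_left ((LatticeAxis.diff_commute _ _).pow_left _)

theorem latticeDiff_add_index_apply (f : ℤ × ℤ → ℝ) :
    latticeDiff (k + i.index) f = latticeDiff k (i.diff f) := by
  rw [latticeDiff_add_index, Module.End.mul_apply]

theorem latticeDiff_add_index_apply' (f : ℤ × ℤ → ℝ) :
    latticeDiff (k + i.index) f = i.diff (latticeDiff k f) := by
  rw [latticeDiff_add_index, (latticeDiff_commute_diff k i).eq, Module.End.mul_apply]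

theorem latticeDiff_comp_add_right (f : ℤ × ℤ → ℝ) (h : ℤ × ℤ) :
    latticeDiff k (fun p => f (p + h)) = fun p => latticeDiff k f (p + h) := by
  induction k using multiIndex_induction with
  | zero => simp only [latticeDiff_zero, Module.End.one_apply]
  | add_index k i ih =>
    funext p
    simp only [latticeDiff_add_index_apply', ih, LatticeAxis.diff_apply, add_right_comm]

theorem latticeDiff_discreteConv (f : ℤ × ℤ → ℝ) {g : ℤ × ℤ → ℝ} (hg : g.HasFiniteSupport) :
    latticeDiff k (discreteConv f g) = discreteConv (latticeDiff k f) g := by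
  induction k using multiIndex_induction with
  | zero => simp only [latticeDiff_zero, Module.End.one_apply]
  | add_index k i ih =>
    rw [latticeDiff_add_index_apply', latticeDiff_add_index_apply', ih]
    exact fwdDiff_discreteConv i.shift _ hg

theorem latticeDiff_mul_separated (u v : ℤ → ℝ) (p : ℤ × ℤ) :
    latticeDiff k (fun q => u q.1 * v q.2) p = (Δ_[1])^[k.1] u p.1 * (Δ_[1])^[k.2] v p.2 := by
  induction k using multiIndex_induction generalizing p with
  | zero => simp only [latticeDiff_zero, Module.End.one_apply, Prod.fst_zero, Prod.snd_zero,
      Function.iterate_zero_apply]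
  | add_index k i ih =>
    rw [latticeDiff_add_index_apply', LatticeAxis.diff_apply, ih, ih]
    cases i <;>
    · simp only [LatticeAxis.index, LatticeAxis.shift, Prod.fst_add, Prod.snd_add, add_zero,
        Function.iterate_succ_apply', fwdDiff]
      ring

end LatticeDiff

/-- The parabolic norm of a lattice point with unit mesh, bounded below by the mesh size. -/
def parabolicNorm (p : ℤ × ℤ) : ℝ := max (max √|(p.1 : ℝ)| |(p.2 : ℝ)|) 1

section ParabolicNorm

theorem one_le_parabolicNorm (p : ℤ × ℤ) : 1 ≤ parabolicNorm p :=
  le_max_right _ _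

theorem abs_snd_le_parabolicNorm (p : ℤ × ℤ) : |(p.2 : ℝ)| ≤ parabolicNorm p :=
  (le_max_right _ _).trans (le_max_left _ _)

theorem sqrt_abs_fst_le_parabolicNorm (p : ℤ × ℤ) : √|(p.1 : ℝ)| ≤ parabolicNorm p :=
  (le_max_left _ _).trans (le_max_left _ _)

theorem abs_fst_le_parabolicNorm_sq (p : ℤ × ℤ) : |(p.1 : ℝ)| ≤ parabolicNorm p ^ 2 :=
  (sqrt_le_left (zero_le_one.trans (one_le_parabolicNorm p))).1 (sqrt_abs_fst_le_parabolicNorm p)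

theorem sqrt_abs_add_le (x y : ℝ) : √|x + y| ≤ √|x| + √|y| := by
  rw [sqrt_le_left (by positivity), add_sq, sq_sqrt (abs_nonneg x), sq_sqrt (abs_nonneg y)]
  have : 0 ≤ 2 * √|x| * √|y| := by positivity
  linarith [abs_add_le x y]

theorem parabolicNorm_add_le (p q : ℤ × ℤ) :
    parabolicNorm (p + q) ≤ parabolicNorm p + parabolicNorm q := by
  refine max_le (max_le ?_ ?_) ?_
  · push_cast [Prod.fst_add]
    exact (sqrt_abs_add_le _ _).trans
      (add_le_add (sqrt_abs_fst_le_parabolicNorm p) (sqrt_abs_fst_le_parabolicNorm q))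
  · push_cast [Prod.snd_add]
    exact (abs_add_le _ _).trans
      (add_le_add (abs_snd_le_parabolicNorm p) (abs_snd_le_parabolicNorm q))
  · linarith [one_le_parabolicNorm p, one_le_parabolicNorm q]

theorem card_Icc_neg_floor_le {x : ℝ} (hx : 1 ≤ x) :
    ((Finset.Icc (-⌊x⌋) ⌊x⌋).card : ℝ) ≤ 3 * x := by
  have hfloor : 0 ≤ ⌊x⌋ := Int.floor_nonneg.2 (zero_le_one.trans hx)
  have hcard : ((Finset.Icc (-⌊x⌋) ⌊x⌋).card : ℤ) = 2 * ⌊x⌋ + 1 := by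
    rw [Int.card_Icc]
    lia
  have hcard' : ((Finset.Icc (-⌊x⌋) ⌊x⌋).card : ℝ) = 2 * ⌊x⌋ + 1 := by exact_mod_cast hcard
  linarith [Int.floor_le x]

theorem card_le_of_parabolicNorm_le (S : Finset (ℤ × ℤ)) {r : ℝ} (hr : 0 < r)
    (hS : ∀ p ∈ S, parabolicNorm p ≤ r) : (S.card : ℝ) ≤ 9 * r ^ (3 : ℝ) := by
  rcases S.eq_empty_or_nonempty with rfl | ⟨p₀, hp₀⟩
  · rw [Finset.card_empty, Nat.cast_zero]
    positivity
  have hr1 : 1 ≤ r := (one_le_parabolicNorm p₀).trans (hS p₀ hp₀)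
  have mem_Icc : ∀ {a : ℤ} {x : ℝ}, |(a : ℝ)| ≤ x → a ∈ Finset.Icc (-⌊x⌋) ⌊x⌋ := fun h =>
    Finset.mem_Icc.2 (abs_le.1 (Int.le_floor.2 (by exact_mod_cast h)))
  have hbox : S ⊆ Finset.Icc (-⌊r ^ 2⌋) ⌊r ^ 2⌋ ×ˢ Finset.Icc (-⌊r⌋) ⌊r⌋ := fun p hp => by
    have hp1 := one_le_parabolicNorm p
    refine Finset.mem_product.2 ⟨mem_Icc ?_, mem_Icc ((abs_snd_le_parabolicNorm p).trans (hS p hp))⟩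
    exact (abs_fst_le_parabolicNorm_sq p).trans (by gcongr; exact hS p hp)
  calc (S.card : ℝ)
      ≤ (Finset.Icc (-⌊r ^ 2⌋) ⌊r ^ 2⌋).card * (Finset.Icc (-⌊r⌋) ⌊r⌋).card := by
        exact_mod_cast (Finset.card_le_card hbox).trans_eq (Finset.card_product _ _)
    _ ≤ 3 * r ^ 2 * (3 * r) := by
        gcongr
        · exact card_Icc_neg_floor_le (one_le_pow₀ hr1)
        · exact card_Icc_neg_floor_le hr1
    _ = 9 * r ^ (3 : ℝ) := by rw [show (3 : ℝ) = (3 : ℕ) by norm_num, rpow_natCast]; push_cast; ring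

theorem isCoarseNorm_parabolicNorm : IsCoarseNorm parabolicNorm 3 where
  one_le := one_le_parabolicNorm
  map_neg p := by simp [parabolicNorm]
  map_add_le := parabolicNorm_add_le
  exists_card_le := ⟨9, fun S _ hr hS => card_le_of_parabolicNorm_le S hr hS⟩

theorem parabolicNorm_pos (p : ℤ × ℤ) : 0 < parabolicNorm p :=
  isCoarseNorm_parabolicNorm.pos p

theorem parabolicNorm_zero : parabolicNorm 0 = 1 := by
  simp [parabolicNorm]

theorem parabolicNorm_shift (i : LatticeAxis) : parabolicNorm i.shift = 1 := by
  cases i <;> simp [parabolicNorm, LatticeAxis.shift]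

theorem parabolicNorm_add_shift_le (p : ℤ × ℤ) (i : LatticeAxis) :
    parabolicNorm (p + i.shift) ≤ 2 * parabolicNorm p := by
  linarith [parabolicNorm_add_le p i.shift, parabolicNorm_shift i, one_le_parabolicNorm p]

theorem parabolicNorm_le_add_shift (p : ℤ × ℤ) (i : LatticeAxis) :
    parabolicNorm p ≤ 2 * parabolicNorm (p + i.shift) := by
  have h := isCoarseNorm_parabolicNorm.le_sub_add' (p + i.shift) p
  rw [add_sub_cancel_left, parabolicNorm_shift] at h
  linarith [one_le_parabolicNorm (p + i.shift)]

theorem latticeDiff_eq_zero_of_vanishing_near {k : ℕ × ℕ} {f : ℤ × ℤ → ℝ} {p : ℤ × ℤ}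
    (hf : ∀ q, parabolicNorm (q - p) ≤ parabolicDegree k + 1 → f q = 0) :
    latticeDiff k f p = 0 := by
  induction k using multiIndex_induction generalizing f with
  | zero =>
    rw [latticeDiff_zero, Module.End.one_apply]
    exact hf p (by simp [parabolicNorm_zero, parabolicDegree])
  | add_index k i ih =>
    have hweight : (1 : ℝ) ≤ i.weight := by exact_mod_cast i.weight_pos
    rw [latticeDiff_add_index_apply]
    refine ih fun q hq => ?_
    have hq' := parabolicNorm_add_le (q - p) i.shift
    rw [parabolicDegree_add_index, Nat.cast_add] at hf
    rw [parabolicNorm_shift, sub_add_eq_add_sub] at hq'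
    rw [LatticeAxis.diff_apply, hf _ (by linarith), hf _ (by linarith), sub_zero]

end ParabolicNorm

theorem exists_pos_forall_of_monotone {ι : Type*} {s : Set ι} (hs : s.Finite) {Q : ι → ℝ → Prop}
    (h : ∀ i ∈ s, ∃ C, Q i C) (hQ : ∀ i, Monotone (Q i)) : ∃ C, 0 < C ∧ ∀ i ∈ s, Q i C := by
  have hev : ∀ᶠ C in Filter.atTop, ∀ i ∈ s, Q i C :=
    (Filter.eventually_all_finite hs).2 fun i hi =>
      (h i hi).elim fun C hC => Filter.eventually_atTop.2 ⟨C, fun _ hle => hQ i hle hC⟩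
  obtain ⟨C, hC, hpos⟩ := (hev.and (Filter.eventually_gt_atTop 0)).exists
  exact ⟨C, hpos, hC⟩

theorem finite_setOf_parabolicDegree_le (n : ℕ) : {k | parabolicDegree k ≤ n}.Finite :=
  (Set.finite_Iic ((n, n) : ℕ × ℕ)).subset fun k (hk : parabolicDegree k ≤ n) => by
    unfold parabolicDegree at hk
    exact Prod.mk_le_mk.2 ⟨by lia, by lia⟩

/-- `KernelBound ζ n M f` says that the discrete singular-kernel norm of order `ζ`, over the
differences of parabolic degree at most `n` and with unit mesh, of `f` is at most `M`. -/
def KernelBound (ζ : ℝ) (n : ℕ) (M : ℝ) (f : ℤ × ℤ → ℝ) : Prop :=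
  ∀ k, parabolicDegree k ≤ n → ∀ p,
    |latticeDiff k f p| ≤ M * parabolicNorm p ^ (ζ - parabolicDegree k)

namespace KernelBound

variable {ζ η M A : ℝ} {n : ℕ} {f g : ℤ × ℤ → ℝ}

theorem abs_le (hf : KernelBound ζ n M f) (p : ℤ × ℤ) : |f p| ≤ M * parabolicNorm p ^ ζ := by
  simpa [latticeDiff_zero, parabolicDegree] using hf 0 (Nat.zero_le n) p

theorem nonneg (hf : KernelBound ζ n M f) : 0 ≤ M :=
  isCoarseNorm_parabolicNorm.nonneg_of_forall_abs_le hf.abs_le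

theorem abs_mul_le (hf : KernelBound ζ n M f) (hg : KernelBound η n A g) (p : ℤ × ℤ) :
    |(f * g) p| ≤ M * A * parabolicNorm p ^ (ζ + η) := by
  have hM := hf.nonneg
  have hp := parabolicNorm_pos p
  calc |(f * g) p| = |f p| * |g p| := abs_mul _ _
    _ ≤ M * parabolicNorm p ^ ζ * (A * parabolicNorm p ^ η) := by
        gcongr
        exacts [hf.abs_le p, hg.abs_le p]
    _ = M * A * parabolicNorm p ^ (ζ + η) := by
        rw [rpow_add hp]
        ring

theorem mono_order {n' : ℕ} (hf : KernelBound ζ n' M f) (hn : n ≤ n') : KernelBound ζ n M f :=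
  fun k hk => hf k (hk.trans hn)

theorem const_smul {c : ℝ} (hf : KernelBound ζ n M f) (hc : 0 ≤ c) :
    KernelBound ζ n (c * M) (c • f) := fun k hk p => by
  rw [map_smul, Pi.smul_apply, smul_eq_mul, abs_mul, abs_of_nonneg hc, mul_assoc]
  exact mul_le_mul_of_nonneg_left (hf k hk p) hc

theorem diff {i : LatticeAxis} (hf : KernelBound ζ (n + i.weight) M f) :
    KernelBound (ζ - i.weight) n M (i.diff f) := fun k hk p => by
  have h := hf (k + i.index) (by rw [parabolicDegree_add_index]; lia) p
  rwa [latticeDiff_add_index_apply, parabolicDegree_add_index, Nat.cast_add, add_comm,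
    ← sub_sub] at h

theorem comp_add_shift (hf : KernelBound ζ n M f) (i : LatticeAxis) :
    KernelBound ζ n (2 ^ (|ζ| + n) * M) (fun p => f (p + i.shift)) := fun k hk p => by
  have hM := hf.nonneg
  have hexp : |ζ - parabolicDegree k| ≤ |ζ| + n := by
    have hk' : (parabolicDegree k : ℝ) ≤ n := by exact_mod_cast hk
    exact (abs_sub _ _).trans (by rw [Nat.abs_cast]; linarith)
  rw [latticeDiff_comp_add_right]
  calc |latticeDiff k f (p + i.shift)|
      ≤ M * (2 ^ |ζ - parabolicDegree k| * parabolicNorm p ^ (ζ - parabolicDegree k)) := by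
        refine (hf k hk _).trans ?_
        gcongr
        exact rpow_le_rpow_abs_mul_rpow (parabolicNorm_pos _) (parabolicNorm_pos _)
          (parabolicNorm_add_shift_le p i) (parabolicNorm_le_add_shift p i) _
    _ ≤ M * (2 ^ (|ζ| + n) * parabolicNorm p ^ (ζ - parabolicDegree k)) := by
        have := parabolicNorm_pos p
        gcongr
        exact one_le_two
    _ = 2 ^ (|ζ| + n) * M * parabolicNorm p ^ (ζ - parabolicDegree k) := by ring

theorem exists_abs_latticeDiff_mul_le (k : ℕ × ℕ) (ζ η : ℝ) :
    ∃ C : ℝ, ∀ (f g : ℤ × ℤ → ℝ) (M A : ℝ), KernelBound ζ (parabolicDegree k) M f →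
      KernelBound η (parabolicDegree k) A g → ∀ p, |latticeDiff k (f * g) p| ≤
        C * M * A * parabolicNorm p ^ (ζ + η - parabolicDegree k) := by
  induction k using multiIndex_induction generalizing ζ η with
  | zero =>
    refine ⟨1, fun f g M A hf hg p => ?_⟩
    simpa [latticeDiff_zero, parabolicDegree] using hf.abs_mul_le hg p
  | add_index k i ih =>
    obtain ⟨C₁, h₁⟩ := ih (ζ - i.weight) η
    obtain ⟨C₂, h₂⟩ := ih ζ (η - i.weight)
    refine ⟨C₁ * 2 ^ (|η| + parabolicDegree k) + C₂, fun f g M A hf hg p => ?_⟩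
    rw [parabolicDegree_add_index] at hf hg
    have hdf := h₁ _ _ _ _ hf.diff ((hg.mono_order (Nat.le_add_right _ _)).comp_add_shift i) p
    have hdg := h₂ _ _ _ _ (hf.mono_order (Nat.le_add_right _ _)) hg.diff p
    rw [latticeDiff_add_index_apply, LatticeAxis.diff_mul, map_add, parabolicDegree_add_index]
    refine (abs_add_le _ _).trans ((add_le_add hdf hdg).trans_eq ?_)
    rw [show ζ - i.weight + η - parabolicDegree k = ζ + (η - i.weight) - parabolicDegree k by ring,
      show ζ + η - (parabolicDegree k + i.weight : ℕ) = ζ + (η - i.weight) - parabolicDegree k by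
        push_cast; ring]
    ring

end KernelBound

section Cutoff

theorem fwdDiff_iter_comp_addMonoidHom {H K E : Type*} [AddCommMonoid H] [AddCommMonoid K]
    [AddCommGroup E] (L : H →+ K) (f : K → E) (h : H) (n : ℕ) :
    (Δ_[h])^[n] (f ∘ L) = (Δ_[L h])^[n] f ∘ L := by
  funext x
  simp [fwdDiff_iter_eq_sum_shift]

theorem abs_fwdDiff_iter_le_of_iteratedDeriv_le {φ : ℝ → ℝ} {n : ℕ} (hφ : ContDiff ℝ n φ) {B : ℝ}
    (hB : ∀ x, |iteratedDeriv n φ x| ≤ B) (h x : ℝ) : |(Δ_[h])^[n] φ x| ≤ B * |h| ^ n := by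
  induction n generalizing φ B with
  | zero => simpa using hB x
  | succ n ih =>
    have hφn : ContDiff ℝ n φ := hφ.of_le (by exact_mod_cast n.le_succ)
    have hshift : ContDiff ℝ n fun y => φ (y + h) := hφn.comp (contDiff_id.add contDiff_const)
    have hderiv : ∀ y, iteratedDeriv n (Δ_[h] φ) y =
        iteratedDeriv n φ (y + h) - iteratedDeriv n φ y := fun y => by
      unfold fwdDiff
      rw [iteratedDeriv_fun_sub hshift.contDiffAt hφn.contDiffAt, iteratedDeriv_comp_add_const]
    have hdiff : Differentiable ℝ (iteratedDeriv n φ) :=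
      hφ.differentiable_iteratedDeriv n (by exact_mod_cast n.lt_succ_self)
    have hbound : ∀ y, |iteratedDeriv n (Δ_[h] φ) y| ≤ B * |h| := fun y => by
      rw [hderiv]
      simpa using Convex.norm_image_sub_le_of_norm_deriv_le (fun z _ => hdiff z)
        (fun z _ => by rw [← iteratedDeriv_succ]; exact hB z) convex_univ
        (Set.mem_univ y) (Set.mem_univ (y + h))
    rw [Function.iterate_succ_apply]
    exact (ih (hshift.sub hφn) hbound).trans_eq (by ring)

/-- A fixed smooth bump function on `ℝ`, equal to `1` on `[-1/2, 1/2]` and supported in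
`[-1, 1]`. -/
def unitBump : ContDiffBump (0 : ℝ) := ⟨1 / 2, 1, by norm_num, by norm_num⟩

theorem unitBump_eq_one {s : ℝ} (hs : |s| ≤ 1 / 2) : unitBump s = 1 :=
  unitBump.one_of_mem_closedBall (by simpa [unitBump] using hs)

theorem unitBump_eq_zero {s : ℝ} (hs : 1 ≤ |s|) : unitBump s = 0 :=
  unitBump.zero_of_le_dist (by simpa [unitBump] using hs)

theorem exists_abs_iteratedDeriv_unitBump_le (k : ℕ) :
    ∃ B, ∀ x, |iteratedDeriv k unitBump x| ≤ B := by
  have hcompact : HasCompactSupport (iteratedDeriv k unitBump) := by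
    induction k with
    | zero => simpa using unitBump.hasCompactSupport
    | succ k ih => rw [iteratedDeriv_succ]; exact ih.deriv
  exact hcompact.exists_bound_of_continuous
    ((unitBump.contDiff (n := k)).continuous_iteratedDeriv k le_rfl)

theorem exists_abs_fwdDiff_iter_unitBump_le (n : ℕ) :
    ∃ B, 0 < B ∧ ∀ k ≤ n, ∀ (h : ℝ) (a : ℤ),
      |(Δ_[1])^[k] (fun i : ℤ => unitBump (h * i)) a| ≤ B * |h| ^ k := by
  obtain ⟨B, hB, hbound⟩ := exists_pos_forall_of_monotone (Set.finite_Iic n)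
    (fun k _ => exists_abs_iteratedDeriv_unitBump_le k) fun _ _ _ hle hx x => (hx x).trans hle
  refine ⟨B, hB, fun k hk h a => ?_⟩
  have hcomp := fwdDiff_iter_comp_addMonoidHom
    ((AddMonoidHom.mulLeft h).comp (Int.castAddHom ℝ)) unitBump 1 k
  have hstep : ((AddMonoidHom.mulLeft h).comp (Int.castAddHom ℝ)) 1 = h := by simp
  rw [hstep] at hcomp
  exact (congrArg abs (congrFun hcomp a)).trans_le
    (abs_fwdDiff_iter_le_of_iteratedDeriv_le unitBump.contDiff (hbound k hk) h _)

/-- A smooth cutoff of the parabolic ball at scale `ρ`, sampled on the lattice. -/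
def parabolicCutoff (ρ : ℝ) (p : ℤ × ℤ) : ℝ :=
  unitBump (4 / ρ ^ 2 * p.1) * unitBump (2 / ρ * p.2)

variable {ρ : ℝ} {p : ℤ × ℤ}

theorem parabolicCutoff_eq_one (hρ : 0 < ρ) (hp : parabolicNorm p ≤ ρ / 4) :
    parabolicCutoff ρ p = 1 := by
  have htime : |4 / ρ ^ 2 * (p.1 : ℝ)| ≤ 1 / 2 := by
    have hp1 : |(p.1 : ℝ)| ≤ (ρ / 4) ^ 2 := (abs_fst_le_parabolicNorm_sq p).trans
      (pow_le_pow_left₀ (parabolicNorm_pos p).le hp 2)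
    rw [abs_mul, abs_of_pos (by positivity)]
    calc 4 / ρ ^ 2 * |(p.1 : ℝ)| ≤ 4 / ρ ^ 2 * (ρ / 4) ^ 2 := by gcongr
      _ ≤ 1 / 2 := by field_simp; norm_num
  have hspace : |2 / ρ * (p.2 : ℝ)| ≤ 1 / 2 := by
    rw [abs_mul, abs_of_pos (by positivity)]
    calc 2 / ρ * |(p.2 : ℝ)| ≤ 2 / ρ * (ρ / 4) := by
          gcongr; exact (abs_snd_le_parabolicNorm p).trans hp
      _ = 1 / 2 := by field
  rw [parabolicCutoff, unitBump_eq_one htime, unitBump_eq_one hspace, one_mul]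

theorem parabolicCutoff_eq_zero (hρ : 2 ≤ ρ) (hp : ρ / 2 < parabolicNorm p) :
    parabolicCutoff ρ p = 0 := by
  have : 0 < ρ := by linarith
  rcases lt_max_iff.1 hp with hp | hp
  · rcases lt_max_iff.1 hp with hp | hp
    · have htime : 1 ≤ |4 / ρ ^ 2 * (p.1 : ℝ)| := by
        rw [lt_sqrt (by positivity)] at hp
        rw [abs_mul, abs_of_pos (by positivity)]
        calc 1 = 4 / ρ ^ 2 * (ρ / 2) ^ 2 := by field
          _ ≤ 4 / ρ ^ 2 * |(p.1 : ℝ)| := by gcongr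
      rw [parabolicCutoff, unitBump_eq_zero htime, zero_mul]
    · have hspace : 1 ≤ |2 / ρ * (p.2 : ℝ)| := by
        rw [abs_mul, abs_of_pos (by positivity)]
        calc 1 = 2 / ρ * (ρ / 2) := by field
          _ ≤ 2 / ρ * |(p.2 : ℝ)| := by gcongr
      rw [parabolicCutoff, unitBump_eq_zero hspace, mul_zero]
  · linarith

theorem exists_abs_latticeDiff_parabolicCutoff_le (n : ℕ) :
    ∃ B, 0 < B ∧ ∀ ρ, 0 < ρ → ∀ k, parabolicDegree k ≤ n → ∀ p,
      |latticeDiff k (parabolicCutoff ρ) p| ≤ B * ρ ^ (-(parabolicDegree k : ℝ)) := by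
  obtain ⟨B, hB, hbound⟩ := exists_abs_fwdDiff_iter_unitBump_le n
  refine ⟨B ^ 2 * 2 ^ n, by positivity, fun ρ hρ k hk p => ?_⟩
  have hk' : 2 * k.1 + k.2 ≤ n := hk
  have htime := hbound k.1 (by lia) (4 / ρ ^ 2) p.1
  have hspace := hbound k.2 (by lia) (2 / ρ) p.2
  rw [abs_of_nonneg (show 0 ≤ 4 / ρ ^ 2 by positivity)] at htime
  rw [abs_of_nonneg (show 0 ≤ 2 / ρ by positivity)] at hspace
  calc |latticeDiff k (parabolicCutoff ρ) p|
      ≤ B * (4 / ρ ^ 2) ^ k.1 * (B * (2 / ρ) ^ k.2) := by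
        unfold parabolicCutoff
        rw [latticeDiff_mul_separated k (fun a => unitBump (4 / ρ ^ 2 * a))
          (fun a => unitBump (2 / ρ * a)), abs_mul]
        gcongr
    _ = B ^ 2 * 2 ^ parabolicDegree k * ρ ^ (-(parabolicDegree k : ℝ)) := by
        rw [rpow_neg hρ.le, rpow_natCast, show 4 / ρ ^ 2 = (2 / ρ) ^ 2 by ring, ← pow_mul,
          parabolicDegree, ← div_eq_mul_inv, mul_div_assoc, ← div_pow, pow_add]
        ring
    _ ≤ B ^ 2 * 2 ^ n * ρ ^ (-(parabolicDegree k : ℝ)) := by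
        gcongr
        exact one_le_two

theorem exists_kernelBound_parabolicCutoff (n : ℕ) :
    ∃ B, 0 < B ∧ ∀ ρ, 2 * ((n : ℝ) + 1) ≤ ρ → KernelBound 0 n B (parabolicCutoff ρ) := by
  obtain ⟨B, hB, hbound⟩ := exists_abs_latticeDiff_parabolicCutoff_le n
  refine ⟨B * 2 ^ n, by positivity, fun ρ hρ k hk p => ?_⟩
  have : (0 : ℝ) ≤ n := n.cast_nonneg
  have hk' : (parabolicDegree k : ℝ) ≤ n := by exact_mod_cast hk
  have hρ0 : 0 < ρ := by linarith
  have hp := parabolicNorm_pos p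
  rw [zero_sub]
  rcases le_or_gt (parabolicNorm p) (2 * ρ) with hle | hgt
  · calc |latticeDiff k (parabolicCutoff ρ) p|
        ≤ B * ρ ^ (-(parabolicDegree k : ℝ)) := hbound ρ hρ0 k hk p
      _ ≤ B * (parabolicNorm p / 2) ^ (-(parabolicDegree k : ℝ)) := by
          gcongr 1
          exact rpow_le_rpow_of_nonpos (by positivity) (by linarith) (by simp)
      _ = B * 2 ^ parabolicDegree k * parabolicNorm p ^ (-(parabolicDegree k : ℝ)) := by
          simp only [rpow_neg hp.le, rpow_neg (half_pos hp).le, rpow_natCast, div_pow]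
          field
      _ ≤ B * 2 ^ n * parabolicNorm p ^ (-(parabolicDegree k : ℝ)) := by
          gcongr
          exact one_le_two
  · rw [latticeDiff_eq_zero_of_vanishing_near, abs_zero]
    · positivity
    · intro q hq
      have := isCoarseNorm_parabolicNorm.le_sub_add' q p
      exact parabolicCutoff_eq_zero (by linarith) (by linarith)

/-- For small `ρ` the ball where the cutoff has to be `1` is empty, so the zero function serves. -/
theorem exists_cutoff (n : ℕ) : ∃ B c : ℝ, 0 < c ∧ ∀ ρ : ℝ, ∃ χ : ℤ × ℤ → ℝ,
    KernelBound 0 n B χ ∧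
    (∀ p q, parabolicNorm p < c * ρ → parabolicNorm (q - p) ≤ n + 1 → χ q = 1) ∧
    (∀ p, ρ / 2 < parabolicNorm p → χ p = 0) := by
  obtain ⟨B, hB, hbound⟩ := exists_kernelBound_parabolicCutoff n
  have : (0 : ℝ) ≤ n := n.cast_nonneg
  refine ⟨B, 1 / (8 * (n + 1)), by positivity, fun ρ => ?_⟩
  have hc : ∀ p, parabolicNorm p < 1 / (8 * (n + 1)) * ρ → 8 * (n + 1) * parabolicNorm p < ρ :=
    fun p hp => by rwa [div_mul_eq_mul_div, one_mul, lt_div_iff₀' (by positivity)] at hp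
  rcases lt_or_ge ρ (8 * (n + 1)) with hρ | hρ
  · refine ⟨0, fun k _ p => ?_, fun p q hp => ?_, fun _ _ => rfl⟩
    · have := parabolicNorm_pos p
      rw [map_zero, Pi.zero_apply, abs_zero]
      positivity
    · nlinarith [hc p hp, one_le_parabolicNorm p]
  · refine ⟨parabolicCutoff ρ, hbound ρ (by linarith), fun p q hp hq => ?_,
      fun p => parabolicCutoff_eq_zero (by linarith)⟩
    have hq' := isCoarseNorm_parabolicNorm.le_sub_add q p
    refine parabolicCutoff_eq_one (by linarith) ?_
    nlinarith [hc p hp, parabolicNorm_pos p]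

end Cutoff

section Convolution

variable {α β : ℝ} {K₁ K₂ : ℤ × ℤ → ℝ}

theorem latticeDiff_discreteConv_eq_add (k : ℕ × ℕ) {χ : ℤ × ℤ → ℝ}
    (hfin₂ : K₂.HasFiniteSupport) (hfin : (K₁ * χ).HasFiniteSupport) :
    latticeDiff k (discreteConv K₁ K₂) =
      discreteConv (latticeDiff k K₂) (K₁ * χ) +
        discreteConv (latticeDiff k (K₁ - K₁ * χ)) K₂ := by
  conv_lhs => rw [← add_sub_cancel (K₁ * χ) K₁]
  rw [add_discreteConv _ _ hfin₂, map_add, discreteConv_comm (K₁ * χ),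
    latticeDiff_discreteConv k _ hfin, latticeDiff_discreteConv k _ hfin₂]

/-- A cutoff at the scale of `p` puts all differences on the factor whose argument stays away from
the origin: on `K₂` where the argument of `K₁` is small, and on `K₁` elsewhere. -/
theorem exists_abs_latticeDiff_discreteConv_le (hα : -3 < α) (hβ : -3 < β) (k : ℕ × ℕ)
    (hk : α + β + 3 < parabolicDegree k) :
    ∃ C : ℝ, ∀ (K₁ K₂ : ℤ × ℤ → ℝ) (M₁ M₂ : ℝ), K₂.HasFiniteSupport →
      KernelBound α (parabolicDegree k) M₁ K₁ → KernelBound β (parabolicDegree k) M₂ K₂ →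
      ∀ p, |latticeDiff k (discreteConv K₁ K₂) p| ≤
        C * M₁ * M₂ * parabolicNorm p ^ (α + β + 3 - parabolicDegree k) := by
  set κ : ℝ := (parabolicDegree k : ℝ)
  obtain ⟨B, c, hc, hcutoff⟩ := exists_cutoff (parabolicDegree k)
  obtain ⟨Cnear, hnear⟩ := isCoarseNorm_parabolicNorm.exists_abs_discreteConv_near_le hα
    (show β - κ ≤ 0 by linarith)
  obtain ⟨Cfar, hfar⟩ := isCoarseNorm_parabolicNorm.exists_abs_discreteConv_far_le
    (show α - κ ≤ 0 by linarith) hβ (show α - κ + β < -3 by linarith) hc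
  obtain ⟨Cmul, hmul⟩ := KernelBound.exists_abs_latticeDiff_mul_le k α 0
  refine ⟨Cnear * B + Cfar * (1 + Cmul * B), fun K₁ K₂ M₁ M₂ hfin₂ hK₁ hK₂ p => ?_⟩
  obtain ⟨χ, hχ, hχ_one, hχ_zero⟩ := hcutoff (parabolicNorm p)
  have hvanish : ∀ q, parabolicNorm p / 2 < parabolicNorm q → (K₁ * χ) q = 0 := fun q hq => by
    rw [Pi.mul_apply, hχ_zero q hq, mul_zero]
  have hfin : (K₁ * χ).HasFiniteSupport :=
    (isCoarseNorm_parabolicNorm.finite_ball (half_pos (parabolicNorm_pos p))).subset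
      fun q hq => not_lt.1 fun hlt => hq (hvanish q hlt)
  have hbound : ∀ q, |(K₁ * χ) q| ≤ M₁ * B * parabolicNorm q ^ α := fun q => by
    simpa only [add_zero] using hK₁.abs_mul_le hχ q
  have hdiff : ∀ q, |latticeDiff k (K₁ - K₁ * χ) q| ≤
      (1 + Cmul * B) * M₁ * parabolicNorm q ^ (α - κ) := fun q => by
    have hprod := hmul K₁ χ M₁ B hK₁ hχ q
    rw [add_zero] at hprod
    rw [map_sub]
    exact (abs_sub _ _).trans ((add_le_add (hK₁ k le_rfl q) hprod).trans_eq (by ring))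
  have hdiff_zero : ∀ q, parabolicNorm q < c * parabolicNorm p →
      latticeDiff k (K₁ - K₁ * χ) q = 0 := fun q hq =>
    latticeDiff_eq_zero_of_vanishing_near fun q' hq' => by
      rw [Pi.sub_apply, Pi.mul_apply, hχ_one q q' hq hq', mul_one, sub_self]
  have hN := hnear _ _ _ _ p (hK₂ k le_rfl) hbound hvanish
  have hF := hfar _ _ _ _ p hfin₂ hdiff hK₂.abs_le hdiff_zero
  rw [latticeDiff_discreteConv_eq_add k hfin₂ hfin]
  refine (abs_add_le _ _).trans ((add_le_add hN hF).trans_eq ?_)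
  rw [show α + 3 + (β - κ) = α + β + 3 - κ by ring, show α - κ + β + 3 = α + β + 3 - κ by ring]
  ring

end Convolution

section Increments

variable {δ A : ℝ}

theorem mul_add_one_rpow_sub_one_le (hδ : 0 ≤ δ) (hδ1 : δ ≤ 1) {x : ℝ} (hx : 0 ≤ x) :
    δ * (x + 1) ^ (δ - 1) ≤ (x + 1) ^ δ - x ^ δ := by
  have hx1 : 0 < x + 1 := by linarith
  have hratio : x / (x + 1) = 1 + -(x + 1)⁻¹ := by field
  have bernoulli : (x / (x + 1)) ^ δ ≤ 1 + δ * -(x + 1)⁻¹ := by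
    rw [hratio]
    exact rpow_one_add_le_one_add_mul_self (by linarith [div_nonneg hx hx1.le]) hδ hδ1
  have hpow : 0 < (x + 1) ^ δ := rpow_pos_of_pos hx1 δ
  rw [div_rpow hx hx1.le, div_le_iff₀ hpow] at bernoulli
  rw [rpow_sub_one hx1.ne', div_eq_mul_inv]
  linarith

theorem abs_sub_zero_le_of_abs_increment_le (hδ : 0 < δ) (hδ1 : δ ≤ 1) (hA : 0 ≤ A) {g : ℕ → ℝ}
    {n : ℕ} (hg : ∀ i < n, |g (i + 1) - g i| ≤ A * ((i : ℝ) + 1) ^ (δ - 1)) :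
    |g n - g 0| ≤ A / δ * (n : ℝ) ^ δ := by
  calc |g n - g 0| ≤ ∑ i ∈ Finset.range n, |g (i + 1) - g i| := by
        rw [← Finset.sum_range_sub]; exact Finset.abs_sum_le_sum_abs _ _
    _ ≤ ∑ i ∈ Finset.range n, A / δ * (((i + 1 : ℕ) : ℝ) ^ δ - (i : ℝ) ^ δ) := by
        refine Finset.sum_le_sum fun i hi => (hg i (Finset.mem_range.1 hi)).trans ?_
        rw [div_mul_eq_mul_div, le_div_iff₀ hδ, mul_assoc, mul_comm _ δ, Nat.cast_add_one]
        gcongr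
        exact mul_add_one_rpow_sub_one_le hδ.le hδ1 i.cast_nonneg
    _ = A / δ * (n : ℝ) ^ δ := by
        rw [← Finset.mul_sum, Finset.sum_range_sub (fun i : ℕ => (i : ℝ) ^ δ), Nat.cast_zero,
          zero_rpow hδ.ne', sub_zero]

theorem abs_sub_zero_le_of_abs_increment_le_int (hδ : 0 < δ) (hδ1 : δ ≤ 1) (hA : 0 ≤ A)
    {g : ℤ → ℝ} {n : ℤ}
    (hg : ∀ i : ℤ, |i| ≤ |n| → |g (i + 1) - g i| ≤ A * max |(i : ℝ)| 1 ^ (δ - 1)) :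
    |g n - g 0| ≤ 2 * A / δ * |(n : ℝ)| ^ δ := by
  have hexp : (2 : ℝ) ^ |δ - 1| ≤ 2 :=
    rpow_le_self_of_one_le one_le_two (by rw [abs_of_nonpos (by linarith)]; linarith)
  obtain ⟨l, rfl | rfl⟩ := n.eq_nat_or_neg
  · refine (abs_sub_zero_le_of_abs_increment_le hδ hδ1 (A := 2 * A) (by positivity)
      (g := fun i => g i) fun i hi => ?_).trans_eq (by simp)
    have hi0 : (0 : ℝ) ≤ i := i.cast_nonneg
    have hinc := hg i (by simpa using hi.le)
    rw [Int.cast_natCast, abs_of_nonneg hi0] at hinc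
    calc |g ((i + 1 : ℕ) : ℤ) - g i| ≤ A * max (i : ℝ) 1 ^ (δ - 1) := by exact_mod_cast hinc
      _ ≤ A * (2 * ((i : ℝ) + 1) ^ (δ - 1)) := by
          have hcomp := rpow_le_rpow_abs_mul_rpow (c := 2) (x := max (i : ℝ) 1) (y := (i : ℝ) + 1)
            (by positivity) (by positivity) (max_le (by linarith) (by linarith))
            (by linarith [le_max_left (i : ℝ) 1, le_max_right (i : ℝ) 1]) (δ - 1)
          gcongr
          exact hcomp.trans (mul_le_mul_of_nonneg_right hexp (by positivity))
      _ = 2 * A * ((i : ℝ) + 1) ^ (δ - 1) := by ring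
  · refine (abs_sub_zero_le_of_abs_increment_le hδ hδ1 (A := 2 * A) (by positivity)
      (g := fun i => g (-i)) fun i hi => ?_).trans_eq (by simp)
    have : (0 : ℝ) ≤ i := i.cast_nonneg
    have hinc := hg (-((i : ℤ) + 1)) (by rw [abs_neg, abs_neg]; exact_mod_cast hi)
    push_cast at hinc ⊢
    rw [abs_neg, abs_of_nonneg (a := (i : ℝ) + 1) (by positivity), max_eq_left (by linarith),
      neg_add_rev, neg_add_cancel_comm, abs_sub_comm, ← neg_add_rev] at hinc
    refine hinc.trans ?_
    gcongr
    linarith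

theorem abs_sub_zero_le_of_abs_increment_le_rpow {γ V : ℝ} {w : ℕ} (hγ : 0 < γ) (hw : 0 < w)
    (hA : 0 ≤ A) {g ν : ℤ → ℝ} {n : ℤ} (hν : ∀ i, 0 < ν i)
    (hle : ∀ i : ℤ, max |(i : ℝ)| 1 ≤ ν i ^ w) (hV : ∀ i, |i| ≤ |n| → ν i ≤ V)
    (hg : ∀ i, |g (i + 1) - g i| ≤ A * ν i ^ (γ - w)) :
    |g n - g 0| ≤ 2 / min (γ / w) 1 * A * V ^ γ := by
  set δ := min (γ / w) 1
  have hw' : (0 : ℝ) < w := by exact_mod_cast hw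
  have hδ : 0 < δ := lt_min (by positivity) one_pos
  have hδ1 : δ ≤ 1 := min_le_right _ _
  have hδγ : w * δ ≤ γ := (le_div_iff₀' hw').1 (min_le_left _ _)
  have hV0 : 0 < V := (hν n).trans_le (hV n le_rfl)
  have hnV : |(n : ℝ)| ≤ V ^ w :=
    (le_max_left _ _).trans ((hle n).trans (pow_le_pow_left₀ (hν n).le (hV n le_rfl) w))
  have hinc : ∀ i : ℤ, |i| ≤ |n| →
      |g (i + 1) - g i| ≤ A * V ^ (γ - w * δ) * max |(i : ℝ)| 1 ^ (δ - 1) := fun i hi => by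
    have hi0 := hν i
    calc |g (i + 1) - g i| ≤ A * ν i ^ (γ - w) := hg i
      _ = A * ν i ^ (γ - w * δ) * (ν i ^ w) ^ (δ - 1) := by
          rw [mul_assoc, ← rpow_natCast (ν i), ← rpow_mul hi0.le, ← rpow_add hi0]
          ring_nf
      _ ≤ A * V ^ (γ - w * δ) * max |(i : ℝ)| 1 ^ (δ - 1) := by
          gcongr A * ?_ * ?_
          · exact rpow_le_rpow hi0.le (hV i hi) (by linarith)
          · exact rpow_le_rpow_of_nonpos (by positivity) (hle i) (by linarith)
  calc |g n - g 0| ≤ 2 * (A * V ^ (γ - w * δ)) / δ * |(n : ℝ)| ^ δ :=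
        abs_sub_zero_le_of_abs_increment_le_int hδ hδ1 (by positivity) hinc
    _ ≤ 2 * (A * V ^ (γ - w * δ)) / δ * (V ^ w) ^ δ := by gcongr
    _ = 2 / δ * A * (V ^ (γ - w * δ) * V ^ (w * δ)) := by
        rw [← rpow_natCast V, ← rpow_mul hV0.le]
        ring
    _ = 2 / δ * A * V ^ γ := by rw [← rpow_add hV0, sub_add_cancel]

/-- Integrate first along the space axis and then in time. -/
theorem exists_abs_le_of_abs_diff_le {γ : ℝ} (hγ : 0 < γ) : ∃ C : ℝ,
    ∀ (f : ℤ × ℤ → ℝ) (A : ℝ), f 0 = 0 →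
      (∀ (i : LatticeAxis) p, |i.diff f p| ≤ A * parabolicNorm p ^ (γ - i.weight)) →
      ∀ p, |f p| ≤ C * A * parabolicNorm p ^ γ := by
  refine ⟨2 / min (γ / LatticeAxis.time.weight) 1 + 2 / min (γ / LatticeAxis.space.weight) 1, ?_⟩
  rintro f A hf hdiff ⟨a, b⟩
  have hA : 0 ≤ A := isCoarseNorm_parabolicNorm.nonneg_of_forall_abs_le (hdiff .time)
  have hnorm : ∀ {a' b' : ℤ}, |a'| ≤ |a| → |b'| ≤ |b| →
      parabolicNorm (a', b') ≤ parabolicNorm (a, b) := fun ha hb => by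
    refine max_le_max (max_le_max (sqrt_le_sqrt ?_) ?_) le_rfl
    · exact_mod_cast ha
    · exact_mod_cast hb
  have hspace := abs_sub_zero_le_of_abs_increment_le_rpow hγ LatticeAxis.space.weight_pos hA
    (g := fun j => f (0, j)) (n := b) (fun j => parabolicNorm_pos (0, j))
    (fun j => by
      rw [LatticeAxis.weight, pow_one]
      exact max_le (abs_snd_le_parabolicNorm (0, j)) (one_le_parabolicNorm _))
    (fun j hj => hnorm (by simp) hj) (fun j => by
      simpa [LatticeAxis.diff_apply, LatticeAxis.shift] using hdiff .space (0, j))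
  have htime := abs_sub_zero_le_of_abs_increment_le_rpow hγ LatticeAxis.time.weight_pos hA
    (g := fun i => f (i, b)) (n := a) (fun i => parabolicNorm_pos (i, b))
    (fun i => max_le (abs_fst_le_parabolicNorm_sq (i, b)) (one_le_pow₀ (one_le_parabolicNorm _)))
    (fun i hi => hnorm hi le_rfl) (fun i => by
      simpa [LatticeAxis.diff_apply, LatticeAxis.shift] using hdiff .time (i, b))
  have hf' : f (0, 0) = 0 := hf
  rw [hf', sub_zero] at hspace
  calc |f (a, b)| ≤ |f (a, b) - f (0, b)| + |f (0, b)| := by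
        simpa using abs_add_le (f (a, b) - f (0, b)) (f (0, b))
    _ ≤ _ := add_le_add htime hspace
    _ = _ := by ring

end Increments

section TaylorExpansion

theorem fwdDiff_iter_ring_choose {R : Type*} [Ring R] [BinomialRing R] (l k : ℕ) :
    (Δ_[1])^[l] (fun n : ℤ => Ring.choose (n : R) k) =
      fun n : ℤ => if l ≤ k then Ring.choose (n : R) (k - l) else 0 := by
  induction l generalizing k with
  | zero => simp only [Function.iterate_zero_apply, Nat.zero_le, if_true, Nat.sub_zero]
  | succ l ih =>
    rw [Function.iterate_succ_apply', ih]
    funext n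
    rcases lt_trichotomy l k with h | rfl | h
    · obtain ⟨d, rfl⟩ := Nat.exists_eq_add_of_lt h
      have hd : l + d + 1 - l = d + 1 ∧ l + d + 1 - (l + 1) = d := ⟨by lia, by lia⟩
      rw [fwdDiff, if_pos h.le, if_pos h.le, if_pos (Nat.succ_le_of_lt h), hd.1, hd.2,
        Int.cast_add, Int.cast_one, Ring.choose_succ_succ, add_sub_cancel_right]
    · simp [fwdDiff]
    · simp [fwdDiff, h.not_ge, (h.trans (Nat.lt_succ_self l)).not_ge]

/-- The discrete monomial `(z)_k / k!` with unit mesh, a product of binomial coefficients. -/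
def binomialMonomial (k : ℕ × ℕ) (p : ℤ × ℤ) : ℝ :=
  Ring.choose (p.1 : ℝ) k.1 * Ring.choose (p.2 : ℝ) k.2

theorem latticeDiff_binomialMonomial (l k : ℕ × ℕ) :
    latticeDiff l (binomialMonomial k) = if l ≤ k then binomialMonomial (k - l) else 0 := by
  funext p
  refine (latticeDiff_mul_separated l (fun n : ℤ => Ring.choose (n : ℝ) k.1)
    (fun n : ℤ => Ring.choose (n : ℝ) k.2) p).trans ?_
  rw [fwdDiff_iter_ring_choose, fwdDiff_iter_ring_choose]
  by_cases h₀ : l.1 ≤ k.1 <;> by_cases h₁ : l.2 ≤ k.2 <;>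
    simp [Prod.le_def, h₀, h₁, binomialMonomial]

theorem binomialMonomial_zero (k : ℕ × ℕ) : binomialMonomial k 0 = if k = 0 then 1 else 0 := by
  rcases k with ⟨_ | k₀, _ | k₁⟩ <;> simp [binomialMonomial]

/-- The discrete Taylor polynomial of `G` at the origin over the multi-indices in `s`. -/
def latticeTaylor (s : Finset (ℕ × ℕ)) (G : ℤ × ℤ → ℝ) : ℤ × ℤ → ℝ :=
  ∑ k ∈ s, latticeDiff k G 0 • binomialMonomial k

theorem latticeTaylor_smul (s : Finset (ℕ × ℕ)) (c : ℝ) (G : ℤ × ℤ → ℝ) :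
    latticeTaylor s (c • G) = c • latticeTaylor s G := by
  simp only [latticeTaylor, map_smul, Pi.smul_apply, smul_assoc, Finset.smul_sum]

variable {s : Finset (ℕ × ℕ)} {l : ℕ × ℕ} {z : ℝ} {n : ℕ}

theorem latticeDiff_latticeTaylor (s : Finset (ℕ × ℕ)) (G : ℤ × ℤ → ℝ) (l : ℕ × ℕ) :
    latticeDiff l (latticeTaylor s G) =
      ∑ k ∈ s, latticeDiff k G 0 • if l ≤ k then binomialMonomial (k - l) else 0 := by
  simp only [latticeTaylor, map_sum, map_smul, latticeDiff_binomialMonomial]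

theorem latticeDiff_latticeTaylor_eq_zero (hl : ∀ k ∈ s, ¬l ≤ k) (G : ℤ × ℤ → ℝ) :
    latticeDiff l (latticeTaylor s G) = 0 := by
  rw [latticeDiff_latticeTaylor]
  exact Finset.sum_eq_zero fun k hk => by rw [if_neg (hl k hk), smul_zero]

theorem latticeDiff_latticeTaylor_apply_zero (hl : l ∈ s) (G : ℤ × ℤ → ℝ) :
    latticeDiff l (latticeTaylor s G) 0 = latticeDiff l G 0 := by
  rw [latticeDiff_latticeTaylor, Finset.sum_apply, Finset.sum_eq_single_of_mem l hl]
  · simp [binomialMonomial_zero]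
  · intro k _ hkl
    by_cases h : l ≤ k
    · have hne : k - l ≠ 0 := fun h0 => hkl ((tsub_eq_zero_iff_le.1 h0).antisymm h)
      simp [h, binomialMonomial_zero, hne]
    · simp [h]

theorem parabolicDegree_mono : Monotone parabolicDegree := fun k l h => by
  have := h.1
  have := h.2
  unfold parabolicDegree
  lia

/-- The multi-indices of parabolic degree less than `z`, over which a kernel of order `z` is
expanded. -/
def lowDegrees (z : ℝ) : Finset (ℕ × ℕ) :=
  (Finset.range ⌈z⌉₊ ×ˢ Finset.range ⌈z⌉₊).filter fun k => (parabolicDegree k : ℝ) < z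

theorem mem_lowDegrees {k : ℕ × ℕ} : k ∈ lowDegrees z ↔ (parabolicDegree k : ℝ) < z := by
  refine Finset.mem_filter.trans (and_iff_right_of_imp fun h => ?_)
  have hk := Nat.lt_ceil.2 h
  unfold parabolicDegree at hk
  exact Finset.mem_product.2 ⟨Finset.mem_range.2 (by lia), Finset.mem_range.2 (by lia)⟩

/-- By downward induction on the degree: differences of degree above `z` do not see the Taylor
polynomial, and those of lower degree vanish at the origin, so they can be integrated from it. -/
theorem exists_abs_latticeDiff_sub_latticeTaylor_le (hz : ∀ q : ℕ, z ≠ q) (hn : ⌊z⌋₊ + 2 ≤ n)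
    (k : ℕ × ℕ) (hk : parabolicDegree k ≤ n) :
    ∃ C : ℝ, ∀ (G : ℤ × ℤ → ℝ) (A : ℝ), 0 ≤ A →
      (∀ l, z < parabolicDegree l → parabolicDegree l ≤ n → ∀ p,
        |latticeDiff l G p| ≤ A * parabolicNorm p ^ (z - parabolicDegree l)) →
      ∀ p, |latticeDiff k (G - latticeTaylor (lowDegrees z) G) p| ≤
        C * A * parabolicNorm p ^ (z - parabolicDegree k) := by
  induction hd : n - parabolicDegree k using Nat.strong_induction_on generalizing k with
  | _ d ih =>
    rcases (hz (parabolicDegree k)).lt_or_gt with hhigh | hlow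
    · refine ⟨1, fun G A _ hG p => ?_⟩
      have hunseen : ∀ l ∈ lowDegrees z, ¬k ≤ l := fun l hl hkl => by
        have hmono : (parabolicDegree k : ℝ) ≤ parabolicDegree l := by
          exact_mod_cast parabolicDegree_mono hkl
        exact absurd (mem_lowDegrees.1 hl) (by linarith)
      rw [map_sub, latticeDiff_latticeTaylor_eq_zero hunseen, sub_zero, one_mul]
      exact hG k hhigh hk p
    · have hfloor : parabolicDegree k ≤ ⌊z⌋₊ := Nat.le_floor hlow.le
      have hweight : ∀ i : LatticeAxis, parabolicDegree k + i.weight ≤ n := fun i => by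
        have : i.weight ≤ 2 := by cases i <;> decide
        lia
      choose C hC using fun i : LatticeAxis => ih (n - parabolicDegree (k + i.index))
        (by have := i.weight_pos; have := hweight i; rw [parabolicDegree_add_index]; lia)
        (k + i.index) (by rw [parabolicDegree_add_index]; exact hweight i) rfl
      obtain ⟨P, hP⟩ := exists_abs_le_of_abs_diff_le (sub_pos.2 hlow)
      have hmax : ∀ i, C i ≤ max (C .time) (C .space) := fun i => by cases i <;> simp
      refine ⟨P * max (C .time) (C .space), fun G A hA hG p => ?_⟩
      rw [mul_assoc P]
      refine hP _ _ ?_ (fun i q => ?_) p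
      · rw [map_sub, Pi.sub_apply,
          latticeDiff_latticeTaylor_apply_zero (mem_lowDegrees.2 hlow), sub_self]
      · have hq := parabolicNorm_pos q
        rw [← latticeDiff_add_index_apply', sub_sub, ← Nat.cast_add, ← parabolicDegree_add_index]
        refine (hC i G A hA hG q).trans ?_
        gcongr
        exact hmax i

theorem exists_kernelBound_sub_latticeTaylor (hz : ∀ q : ℕ, z ≠ q) (hn : ⌊z⌋₊ + 2 ≤ n) :
    ∃ C : ℝ, 0 < C ∧ ∀ (G : ℤ × ℤ → ℝ) (A : ℝ), 0 ≤ A →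
      (∀ l, z < parabolicDegree l → parabolicDegree l ≤ n → ∀ p,
        |latticeDiff l G p| ≤ A * parabolicNorm p ^ (z - parabolicDegree l)) →
      KernelBound z n (C * A) (G - latticeTaylor (lowDegrees z) G) := by
  obtain ⟨C, hC, hbound⟩ := exists_pos_forall_of_monotone (finite_setOf_parabolicDegree_le n)
    (exists_abs_latticeDiff_sub_latticeTaylor_le hz hn)
    fun k _ _ hle h G A hA hG p => (h G A hA hG p).trans <| by
      have := parabolicNorm_pos p
      gcongr
  exact ⟨C, hC, fun G A hA hG k hk => hbound k hk G A hA hG⟩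

theorem exists_kernelBound_discreteConv_sub_latticeTaylor {α β : ℝ} (hα : -3 < α) (hβ : -3 < β)
    (hz : ∀ q : ℕ, α + β + 3 ≠ q) (hn : ⌊α + β + 3⌋₊ + 2 ≤ n) :
    ∃ C : ℝ, 0 < C ∧ ∀ (K₁ K₂ : ℤ × ℤ → ℝ) (M₁ M₂ : ℝ), K₂.HasFiniteSupport →
      KernelBound α n M₁ K₁ → KernelBound β n M₂ K₂ →
      KernelBound (α + β + 3) n (C * M₁ * M₂)
        (discreteConv K₁ K₂ - latticeTaylor (lowDegrees (α + β + 3)) (discreteConv K₁ K₂)) := by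
  obtain ⟨D, hD, hconv⟩ := exists_pos_forall_of_monotone
    ((finite_setOf_parabolicDegree_le n).inter_of_right {k | α + β + 3 < parabolicDegree k})
    (fun k hk => exists_abs_latticeDiff_discreteConv_le hα hβ k hk.1)
    fun k _ _ hle h K₁ K₂ M₁ M₂ hfin hK₁ hK₂ p => (h K₁ K₂ M₁ M₂ hfin hK₁ hK₂ p).trans <| by
      have := parabolicNorm_pos p
      have := hK₁.nonneg
      have := hK₂.nonneg
      gcongr
  obtain ⟨E, hE, htaylor⟩ := exists_kernelBound_sub_latticeTaylor hz hn
  refine ⟨E * D, by positivity, fun K₁ K₂ M₁ M₂ hfin hK₁ hK₂ => ?_⟩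
  have hM₁ := hK₁.nonneg
  have hM₂ := hK₂.nonneg
  rw [mul_assoc E D, mul_assoc E]
  exact htaylor _ _ (by positivity) fun l hl hln =>
    hconv l ⟨hl, hln⟩ K₁ K₂ M₁ M₂ hfin (hK₁.mono_order hln) (hK₂.mono_order hln)

end TaylorExpansion

section Scaling

variable {ε : ℝ}

theorem fdiff_eq_latticeDiff_div (ε : ℝ) (k : ℕ × ℕ) (f : ℤ → ℤ → ℝ) (m j : ℤ) :
    fdiff ε k.1 k.2 f m j =
      latticeDiff k (Function.uncurry f) (m, j) / ε ^ parabolicDegree k := by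
  obtain ⟨k₀, k₁⟩ := k
  induction k₀ generalizing m j with
  | zero =>
    induction k₁ generalizing m j with
    | zero => simp [fdiff, latticeDiff_zero, parabolicDegree, ← Prod.zero_eq_mk]
    | succ k₁ ih =>
      have hstep := latticeDiff_add_index_apply' (0, k₁) .space (Function.uncurry f)
      have hdeg := parabolicDegree_add_index (0, k₁) .space
      simp only [LatticeAxis.index, LatticeAxis.weight, Prod.mk_add_mk, add_zero] at hstep hdeg
      rw [hstep, hdeg, LatticeAxis.diff_apply, pow_succ, ← div_div, sub_div]
      simp only [fdiff, Function.iterate_zero_apply, Function.iterate_succ_apply', fdX] at ih ⊢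
      rw [ih, ih]
      simp [LatticeAxis.shift]
  | succ k₀ ih =>
    have hstep := latticeDiff_add_index_apply' (k₀, k₁) .time (Function.uncurry f)
    have hdeg := parabolicDegree_add_index (k₀, k₁) .time
    simp only [LatticeAxis.index, LatticeAxis.weight, Prod.mk_add_mk, add_zero] at hstep hdeg
    rw [hstep, hdeg, LatticeAxis.diff_apply, pow_add, ← div_div, sub_div]
    simp only [fdiff, Function.iterate_succ_apply', fdT] at ih ⊢
    rw [ih, ih]
    simp [LatticeAxis.shift]

theorem snorm_eq (hε : 0 ≤ ε) (m j : ℤ) : snorm ε m j = ε * max √|(m : ℝ)| |(j : ℝ)| := by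
  rw [snorm, abs_mul, abs_mul, abs_of_nonneg hε, abs_of_nonneg (sq_nonneg ε),
    sqrt_mul (sq_nonneg ε), sqrt_sq hε, mul_max_of_nonneg _ _ hε]

theorem snormE_eq (hε : 0 ≤ ε) (m j : ℤ) : snormE ε m j = ε * parabolicNorm (m, j) := by
  rw [snormE, snorm_eq hε, parabolicNorm, mul_max_of_nonneg _ 1 hε, mul_one]

theorem singBound_iff_kernelBound (hε : 0 < ε) {ζ M : ℝ} {n : ℕ} {K : ℤ → ℤ → ℝ} :
    SingBound ε ζ n M K ↔ KernelBound ζ n (M * ε ^ ζ) (Function.uncurry K) := by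
  have hscale : ∀ (k : ℕ × ℕ) (m j : ℤ),
      |fdiff ε k.1 k.2 K m j| ≤ M * snormE ε m j ^ (ζ - (2 * (k.1 : ℝ) + k.2)) ↔
        |latticeDiff k (Function.uncurry K) (m, j)| ≤
          M * ε ^ ζ * parabolicNorm (m, j) ^ (ζ - parabolicDegree k) := fun k m j => by
    have hdeg : 2 * (k.1 : ℝ) + k.2 = parabolicDegree k := by simp [parabolicDegree]
    have hpow : 0 < ε ^ parabolicDegree k := pow_pos hε _
    rw [fdiff_eq_latticeDiff_div, snormE_eq hε.le, hdeg, abs_div, abs_of_pos hpow,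
      mul_rpow hε.le (parabolicNorm_pos _).le, rpow_sub hε, rpow_natCast, div_le_iff₀ hpow]
    field_simp
  exact ⟨fun h k hk p => (hscale k p.1 p.2).1 (h k.1 k.2 hk p.1 p.2),
    fun h k₀ k₁ hk m j => (hscale (k₀, k₁) m j).2 (h (k₀, k₁) hk (m, j))⟩

theorem SuppIn.hasFiniteSupport_uncurry {R : ℝ} {K : ℤ → ℤ → ℝ} (hK : SuppIn ε R K) (hε : 0 < ε) :
    (Function.uncurry K).HasFiniteSupport := by
  refine (isCoarseNorm_parabolicNorm.finite_ball (r := max (R / ε) 1) (by positivity)).subset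
    fun p hp => show parabolicNorm p ≤ _ from
      max_le_max (not_lt.1 fun hlt => hp (hK p.1 p.2 ?_)) le_rfl
  rwa [snorm_eq hε.le, ← div_lt_iff₀' hε]

theorem uncurry_dconv (ε : ℝ) (K₁ K₂ : ℤ → ℤ → ℝ) :
    Function.uncurry (dconv ε K₁ K₂) =
      ε ^ 3 • discreteConv (Function.uncurry K₁) (Function.uncurry K₂) :=
  rfl

theorem ring_choose_eq_prod_div (x : ℝ) (k : ℕ) :
    Ring.choose x k = (∏ i ∈ Finset.range k, (x - i)) / k.factorial := by
  rw [Ring.choose_eq_smul, ← descPochhammer_eval_eq_prod_range, smul_eq_mul, inv_mul_eq_div,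
    ← Polynomial.aeval_eq_smeval, ← descPochhammer_map (algebraMap ℤ ℝ),
    Polynomial.eval_map_algebraMap]

theorem dmonomial_div_mul_fdiff (hε : ε ≠ 0) (k : ℕ × ℕ) (f : ℤ → ℤ → ℝ) (m j : ℤ) :
    dmonomial ε k.1 k.2 m j / (k.1.factorial * k.2.factorial) * fdiff ε k.1 k.2 f 0 0 =
      latticeDiff k (Function.uncurry f) 0 * binomialMonomial k (m, j) := by
  simp only [fdiff_eq_latticeDiff_div, dmonomial, binomialMonomial, ring_choose_eq_prod_div,
    ← mul_sub, Finset.prod_mul_distrib, Finset.prod_const, Finset.card_range, parabolicDegree,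
    pow_add, pow_mul, Prod.mk_zero_zero]
  field_simp

theorem uncurry_dconvTaylor (hε : ε ≠ 0) (z : ℝ) (K₁ K₂ : ℤ → ℤ → ℝ) :
    Function.uncurry (dconvTaylor ε z K₁ K₂) =
      Function.uncurry (dconv ε K₁ K₂) -
        latticeTaylor (lowDegrees z) (Function.uncurry (dconv ε K₁ K₂)) := by
  have hdeg : ∀ k : ℕ × ℕ, (parabolicDegree k : ℝ) = 2 * (k.1 : ℝ) + k.2 := fun k => by
    simp [parabolicDegree]
  funext ⟨m, j⟩
  simp only [latticeTaylor, Pi.sub_apply, Finset.sum_apply, Pi.smul_apply, smul_eq_mul,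
    ← dmonomial_div_mul_fdiff hε]
  simp only [lowDegrees, Finset.sum_filter, Finset.sum_product, hdeg]
  rfl

theorem statement13_general {ζ₁ ζ₂ : ℝ} (h₁ : -3 < ζ₁) (h₂ : -3 < ζ₂)
    (hbar_nat : ∀ q : ℕ, ζ₁ + ζ₂ + 3 ≠ q) {n : ℕ} (hn : ⌊ζ₁ + ζ₂ + 3⌋₊ + 2 ≤ n) :
    ∃ C : ℝ, 0 < C ∧ ∀ ε : ℝ, 0 < ε → ∀ K₁ K₂ : ℤ → ℤ → ℝ,
      (Function.uncurry K₂).HasFiniteSupport → ∀ M₁ M₂ : ℝ,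
        SingBound ε ζ₁ n M₁ K₁ → SingBound ε ζ₂ n M₂ K₂ →
        SingBound ε (ζ₁ + ζ₂ + 3) n (C * M₁ * M₂) (dconvTaylor ε (ζ₁ + ζ₂ + 3) K₁ K₂) := by
  obtain ⟨C, hC, hbound⟩ :=
    exists_kernelBound_discreteConv_sub_latticeTaylor h₁ h₂ hbar_nat hn
  refine ⟨C, hC, fun ε hε K₁ K₂ hfin M₁ M₂ hK₁ hK₂ => ?_⟩
  rw [singBound_iff_kernelBound hε] at hK₁ hK₂ ⊢
  have hscale : C * M₁ * M₂ * ε ^ (ζ₁ + ζ₂ + 3) =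
      ε ^ 3 * (C * (M₁ * ε ^ ζ₁) * (M₂ * ε ^ ζ₂)) := by
    rw [rpow_add hε, rpow_add hε, show (3 : ℝ) = (3 : ℕ) by norm_num, rpow_natCast]
    ring
  rw [uncurry_dconvTaylor hε.ne', uncurry_dconv, latticeTaylor_smul, ← smul_sub, hscale]
  exact (hbound _ _ _ _ hfin hK₁ hK₂).const_smul (by positivity)

end Scaling

/-- convolution of discrete singular kernels of orders
`ζ₁, ζ₂ > -3` with `ζ̄ = ζ₁ + ζ₂ + 3 ∈ (0,∞) \ ℕ`, after subtracting the
discrete Taylor polynomial at the origin, is a discrete singular kernel of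
order `ζ̄`, uniformly in `ε`. -/
theorem statement13 (ζ₁ ζ₂ : ℝ) (h₁ : -3 < ζ₁) (h₂ : -3 < ζ₂)
    (hbar_pos : 0 < ζ₁ + ζ₂ + 3) (hbar_nat : ∀ q : ℕ, ζ₁ + ζ₂ + 3 ≠ (q : ℝ))
    (m : ℕ) (R : ℝ) (hR : 0 < R) :
    ∃ C : ℝ, 0 < C ∧
      ∀ (N : ℕ) (ε : ℝ), ε = ((2 : ℝ) ^ N)⁻¹ → 4 * (m : ℝ) * ε < 1 →
      ∀ K₁ K₂ : ℤ → ℤ → ℝ, SuppIn ε R K₁ → SuppIn ε R K₂ →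
      ∀ M₁ M₂ : ℝ, 0 ≤ M₁ → 0 ≤ M₂ →
        SingBound ε ζ₁ (max m (Nat.floor (ζ₁ + ζ₂ + 3) + 2)) M₁ K₁ →
        SingBound ε ζ₂ (max m (Nat.floor (ζ₁ + ζ₂ + 3) + 2)) M₂ K₂ →
        SingBound ε (ζ₁ + ζ₂ + 3) m (C * M₁ * M₂)
          (dconvTaylor ε (ζ₁ + ζ₂ + 3) K₁ K₂) := by
  obtain ⟨C, hC, hbound⟩ := statement13_general h₁ h₂ hbar_nat (le_max_right m _)
  refine ⟨C, hC, fun N ε hε _ K₁ K₂ _ hK₂ M₁ M₂ _ _ hb₁ hb₂ k₀ k₁ hk => ?_⟩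
  have hε_pos : 0 < ε := hε ▸ by positivity
  exact hbound ε hε_pos K₁ K₂ (hK₂.hasFiniteSupport_uncurry hε_pos) M₁ M₂ hb₁ hb₂ k₀ k₁
    (hk.trans (le_max_left _ _))
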